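/- Let η be the uniform (Lebesgue) probability measure on [0,1]. Then the operator L_η is its own inverse: for every probability measure m on [0,1], L_η(L_η(m)) = m. -/

import Mathlib

open MeasureTheory Set

/-- The tail distribution `F_m(α) := m((α,1])` of a probability measure `m` on `[0,1]`. -/
noncomputable def tailDist (m : Measure ℝ) (α : ℝ) : ℝ := (m (Set.Ioc α 1)).toReal

/-- The generalized inverse `S⁻¹(t) := sup {α ∈ [0,1] : S(α) > t}` (with `sup ∅ := 0`). -/
noncomputable def genInv (S : ℝ → ℝ) (t : ℝ) : ℝ :=
  sSup {α ∈ Set.Icc (0 : ℝ) 1 | t < S α}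

open ProbabilityTheory Filter Topology

section TailDistribution

variable {m : Measure ℝ} [IsProbabilityMeasure m]

theorem cdf_eq_one_of_one_le (hsupp : m (Icc (0 : ℝ) 1)ᶜ = 0) {α : ℝ} (hα : 1 ≤ α) :
    cdf m α = 1 := by
  rw [cdf_eq_real, measureReal_def,
    (prob_compl_eq_zero_iff measurableSet_Iic).1 (measure_mono_null _ hsupp), ENNReal.toReal_one]
  exact compl_subset_compl.2 fun x hx => hx.2.trans hα

theorem cdf_eq_zero_of_neg (hsupp : m (Icc (0 : ℝ) 1)ᶜ = 0) {α : ℝ} (hα : α < 0) :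
    cdf m α = 0 := by
  rw [cdf_eq_real, measureReal_def, measure_mono_null _ hsupp, ENNReal.toReal_zero]
  exact fun x hx hx' => (hx'.1.trans hx).not_gt hα

theorem tailDist_eq_one_sub_cdf (hsupp : m (Icc (0 : ℝ) 1)ᶜ = 0) {α : ℝ} (hα : α ≤ 1) :
    tailDist m α = 1 - cdf m α := by
  have h : m.real (Iic α ∪ Ioc α 1) = m.real (Iic α) + m.real (Ioc α 1) :=
    measureReal_union (Iic_disjoint_Ioc le_rfl) measurableSet_Ioc
  rw [Iic_union_Ioc_eq_Iic hα, ← cdf_eq_real, ← cdf_eq_real,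
    cdf_eq_one_of_one_le hsupp le_rfl] at h
  rw [tailDist, ← measureReal_def]
  linarith

/-- Right-continuity of the tail distribution, in the form needed for inversion. -/
theorem exists_gt_lt_tailDist (hsupp : m (Icc (0 : ℝ) 1)ᶜ = 0) {α t : ℝ} (hα : α ≤ 1)
    (ht : 0 ≤ t) (h : t < tailDist m α) : ∃ β, α < β ∧ β ≤ 1 ∧ t < tailDist m β := by
  rw [tailDist_eq_one_sub_cdf hsupp hα] at h
  have hcont : Tendsto (cdf m) (𝓝[>] α) (𝓝 (cdf m α)) :=
    ((cdf m).right_continuous α).mono Ioi_subset_Ici_self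
  obtain ⟨β, hβ, hαβ⟩ := ((hcont.eventually_lt_const (show cdf m α < 1 - t by linarith)).and
    self_mem_nhdsWithin).exists
  have hβ1 : β ≤ 1 := by
    by_contra! hlt
    rw [cdf_eq_one_of_one_le hsupp hlt.le] at hβ
    linarith
  exact ⟨β, hαβ, hβ1, by rw [tailDist_eq_one_sub_cdf hsupp hβ1]; linarith⟩

theorem tailDist_antitone : Antitone (tailDist m) := fun _ _ h =>
  measureReal_mono (Ioc_subset_Ioc_left h)

theorem tailDist_mem_Icc (α : ℝ) : tailDist m α ∈ Icc (0 : ℝ) 1 :=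
  ⟨measureReal_nonneg, measureReal_le_one⟩

end TailDistribution

theorem genInv_mem_Icc (S : ℝ → ℝ) (t : ℝ) : genInv S t ∈ Icc (0 : ℝ) 1 :=
  ⟨Real.sSup_nonneg fun _ h => h.1.1, Real.sSup_le (fun _ h => h.1.2) zero_le_one⟩

theorem lt_genInv_iff {S : ℝ → ℝ} {α t : ℝ} (hα : 0 ≤ α) :
    α < genInv S t ↔ ∃ β ∈ Icc (0 : ℝ) 1, t < S β ∧ α < β := by
  constructor
  · intro h
    have hne : {β ∈ Icc (0 : ℝ) 1 | t < S β}.Nonempty := by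
      by_contra hempty
      rw [genInv, not_nonempty_iff_eq_empty.1 hempty, Real.sSup_empty] at h
      exact h.not_ge hα
    obtain ⟨β, hβ, hαβ⟩ := exists_lt_of_lt_csSup hne h
    exact ⟨β, hβ.1, hβ.2, hαβ⟩
  · rintro ⟨β, hβ, htβ, hαβ⟩
    exact hαβ.trans_le (le_csSup ⟨1, fun _ h => h.1.2⟩ ⟨hβ, htβ⟩)

/-- A tail distribution is recovered from its generalized inverse by inverting once more. -/
theorem genInv_eq_tailDist {m : Measure ℝ} [IsProbabilityMeasure m]
    (hsupp : m (Icc (0 : ℝ) 1)ᶜ = 0) {G : ℝ → ℝ}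
    (hG : ∀ t ∈ Icc (0 : ℝ) 1, G t = genInv (tailDist m) t) {α : ℝ} (hα : α ∈ Icc (0 : ℝ) 1) :
    genInv G α = tailDist m α := by
  have hiff : ∀ t ∈ Icc (0 : ℝ) 1, α < G t ↔ t < tailDist m α := by
    intro t ht
    rw [hG t ht, lt_genInv_iff hα.1]
    constructor
    · rintro ⟨β, -, htβ, hαβ⟩
      exact htβ.trans_le (tailDist_antitone hαβ.le)
    · intro h
      obtain ⟨β, hαβ, hβ1, htβ⟩ := exists_gt_lt_tailDist hsupp hα.2 ht.1 h
      exact ⟨β, ⟨hα.1.trans hαβ.le, hβ1⟩, htβ, hαβ⟩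
  have hF := tailDist_mem_Icc (m := m) α
  refine le_antisymm (Real.sSup_le (fun t ht => ((hiff t ht.1).1 ht.2).le) hF.1) ?_
  refine le_of_forall_lt_imp_le_of_dense fun t ht => ?_
  rcases lt_or_ge t 0 with ht0 | ht0
  · exact ht0.le.trans (genInv_mem_Icc G α).1
  · have htI : t ∈ Icc (0 : ℝ) 1 := ⟨ht0, ht.le.trans hF.2⟩
    exact le_csSup ⟨1, fun _ h => h.1.2⟩ ⟨htI, (hiff t htI).2 ht⟩

theorem eq_of_tailDist_eq {m₁ m₂ : Measure ℝ} [IsProbabilityMeasure m₁] [IsProbabilityMeasure m₂]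
    (h₁ : m₁ (Icc (0 : ℝ) 1)ᶜ = 0) (h₂ : m₂ (Icc (0 : ℝ) 1)ᶜ = 0)
    (h : ∀ α ∈ Icc (0 : ℝ) 1, tailDist m₁ α = tailDist m₂ α) : m₁ = m₂ := by
  refine Measure.eq_of_cdf m₁ m₂ (StieltjesFunction.ext fun α => ?_)
  rcases lt_or_ge α 0 with hα0 | hα0
  · rw [cdf_eq_zero_of_neg h₁ hα0, cdf_eq_zero_of_neg h₂ hα0]
  rcases le_or_gt α 1 with hα1 | hα1
  · have := h α ⟨hα0, hα1⟩
    rw [tailDist_eq_one_sub_cdf h₁ hα1, tailDist_eq_one_sub_cdf h₂ hα1] at this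
    linarith
  · rw [cdf_eq_one_of_one_le h₁ hα1.le, cdf_eq_one_of_one_le h₂ hα1.le]

/-- When `η` is the uniform (Lebesgue) probability measure on `[0,1]` with cumulative
distribution function `K`, the operator `L_η` is its own inverse: if `m' = L_η(m)` (i.e. `m'`
has tail distribution `K ∘ F_m⁻¹`) and `m'' = L_η(m')`, then `m'' = m`. -/
theorem uniform_eta_operator_involutive
    (η : Measure ℝ) (hη : η = volume.restrict (Set.Icc (0 : ℝ) 1))
    (K : ℝ → ℝ) (hK : K = fun u => (η (Set.Icc (0 : ℝ) u)).toReal)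
    (m : Measure ℝ) (hm : IsProbabilityMeasure m) (hmsupp : m (Set.Icc (0 : ℝ) 1)ᶜ = 0)
    (m' : Measure ℝ) (hm' : IsProbabilityMeasure m') (hm'supp : m' (Set.Icc (0 : ℝ) 1)ᶜ = 0)
    (m'' : Measure ℝ) (hm'' : IsProbabilityMeasure m'')
    (hm''supp : m'' (Set.Icc (0 : ℝ) 1)ᶜ = 0)
    (htail1 : ∀ t ∈ Set.Icc (0 : ℝ) 1, tailDist m' t = K (genInv (tailDist m) t))
    (htail2 : ∀ t ∈ Set.Icc (0 : ℝ) 1, tailDist m'' t = K (genInv (tailDist m') t)) :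
    m'' = m := by
  have hKid : ∀ u ∈ Icc (0 : ℝ) 1, K u = u := by
    intro u hu
    simp only [hK, hη]
    rw [Measure.restrict_apply measurableSet_Icc,
      inter_eq_left.2 (Icc_subset_Icc_right hu.2), Real.volume_Icc, sub_zero,
      ENNReal.toReal_ofReal hu.1]
  refine eq_of_tailDist_eq hm''supp hmsupp fun α hα => ?_
  rw [htail2 α hα, hKid _ (genInv_mem_Icc _ _)]
  refine genInv_eq_tailDist hmsupp (fun t ht => ?_) hα
  rw [htail1 t ht, hKid _ (genInv_mem_Icc _ _)]
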